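/- Let B be a real n×1 column vector, K a real 1×n row vector, E a real n×n matrix, q ≥ 1, and for each integer k ≥ 0 let ℓ_k ∈ ℝ^q be a column vector with ℓ_kᵀ·𝟙 = 1. Let x : ℕ → ℝ^{qn} satisfy the recursion x[k+1] = (I_q ⊗ ((I_n − B·K)·E) + 𝟙ℓ_kᵀ ⊗ ((B·K)·E)) · x[k]. Then for every k and every index i ∈ {1,…,q}, the i-th block x_i ∈ ℝ^n of x satisfies x_i[k+1] = (I_n − B·K)·E·x_i[k] + (ℓ_kᵀ ⊗ ((B·K)·E))·x[k], and consequently for every pair (i, j) the error e_{ij}[k] := x_i[k] − x_j[k] evolves as e_{ij}[k+1] = (I_n − B·K)·E·e_{ij}[k]. -/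

import Mathlib

open Matrix Kronecker

/-- The all-ones column vector `𝟙 ∈ ℝ^q`, as a `q×1` matrix. -/
def onesCol (q : ℕ) : Matrix (Fin q) (Fin 1) ℝ := Matrix.of fun _ _ => 1

/-!
The `i`-th block of `x : m × p → R` is `Function.curry x i`, and the `i`-th block of `(W ⊗ₖ C) *ᵥ x`
is `∑ j, W i j • C *ᵥ curry x j`, so it depends on `W` only through its row `i`. All rows of `𝟙ℓᵀ`
are equal to `ℓᵀ`; hence the coupling term contributes the same vector to every block and cancels
in differences.
-/

section KroneckerBlocks

open Function

variable {l l' m n p R : Type*} [Fintype m] [Fintype p]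

theorem curry_kronecker_mulVec [NonUnitalSemiring R] (W : Matrix l m R) (C : Matrix n p R)
    (x : m × p → R) (i : l) :
    curry ((W ⊗ₖ C) *ᵥ x) i = ∑ j, W i j • C *ᵥ curry x j := by
  ext t
  simp only [curry_apply, mulVec, dotProduct, kronecker_apply, Fintype.sum_prod_type,
    Finset.sum_apply, Pi.smul_apply, smul_eq_mul, Finset.mul_sum, mul_assoc]

theorem curry_kronecker_mulVec_congr [NonUnitalSemiring R] {W : Matrix l m R}
    {W' : Matrix l' m R} {i : l} {i' : l'} (h : W i = W' i') (C : Matrix n p R) (x : m × p → R) :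
    curry ((W ⊗ₖ C) *ᵥ x) i = curry ((W' ⊗ₖ C) *ᵥ x) i' := by
  simp only [curry_kronecker_mulVec, h]

theorem curry_one_kronecker_mulVec [Semiring R] [DecidableEq m] (A : Matrix n p R)
    (x : m × p → R) (i : m) :
    curry (((1 : Matrix m m R) ⊗ₖ A) *ᵥ x) i = A *ᵥ curry x i := by
  simp only [curry_kronecker_mulVec, one_apply, ite_smul, one_smul, zero_smul,
    Finset.sum_ite_eq, Finset.mem_univ, if_true]

theorem curry_one_kronecker_add_kronecker_mulVec [Semiring R] [DecidableEq m]
    (A C : Matrix n p R) (W : Matrix m m R) (x : m × p → R) (i : m) :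
    curry (((1 : Matrix m m R) ⊗ₖ A + W ⊗ₖ C) *ᵥ x) i =
      A *ᵥ curry x i + curry ((W ⊗ₖ C) *ᵥ x) i := by
  rw [add_mulVec, ← curry_one_kronecker_mulVec A x i]
  rfl

theorem curry_sub_curry_one_kronecker_add_kronecker_mulVec [Ring R] [DecidableEq m]
    (A C : Matrix n p R) {W : Matrix m m R} {i j : m} (h : W i = W j) (x : m × p → R) :
    curry (((1 : Matrix m m R) ⊗ₖ A + W ⊗ₖ C) *ᵥ x) i -
        curry (((1 : Matrix m m R) ⊗ₖ A + W ⊗ₖ C) *ᵥ x) j =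
      A *ᵥ (curry x i - curry x j) := by
  rw [curry_one_kronecker_add_kronecker_mulVec, curry_one_kronecker_add_kronecker_mulVec,
    curry_kronecker_mulVec_congr h, add_sub_add_right_eq_sub, mulVec_sub]

theorem blockwise_recursion_and_error_dynamics_general [Ring R] [DecidableEq m]
    (A C : ℕ → Matrix p p R) (L : ℕ → Matrix (Fin 1) m R) (x : ℕ → m × p → R)
    (hx : ∀ k, x (k + 1) =
      ((1 : Matrix m m R) ⊗ₖ A k + replicateRow m (L k 0) ⊗ₖ C k) *ᵥ x k) :
    (∀ k i, curry (x (k + 1)) i = A k *ᵥ curry (x k) i + curry ((L k ⊗ₖ C k) *ᵥ x k) 0) ∧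
    ∀ k i j, curry (x (k + 1)) i - curry (x (k + 1)) j =
      A k *ᵥ (curry (x k) i - curry (x k) j) := by
  refine ⟨fun k i => ?block, fun k i j => ?error⟩
  case block =>
    have same_row : replicateRow m (L k 0) i = L k 0 := rfl
    rw [hx, curry_one_kronecker_add_kronecker_mulVec, curry_kronecker_mulVec_congr same_row]
  case error =>
    have same_row : replicateRow m (L k 0) i = replicateRow m (L k 0) j := rfl
    rw [hx, curry_sub_curry_one_kronecker_add_kronecker_mulVec _ _ same_row]

end KroneckerBlocks

theorem onesCol_mul {q : ℕ} {m : Type*} (v : Matrix (Fin 1) m ℝ) :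
    onesCol q * v = replicateRow (Fin q) (v 0) := by
  ext i j
  simp [onesCol, mul_apply]

/-- blockwise form of the time-varying recursion
`x[k+1] = (I ⊗ (I-BK)E + 𝟙ℓₖᵀ ⊗ (BK)E) x[k]`, and the induced autonomous
error dynamics `e_{ij}[k+1] = (I-BK)E e_{ij}[k]`. -/
theorem blockwise_recursion_and_error_dynamics {q n : ℕ} (hq : 1 ≤ q)
    (B : Matrix (Fin n) (Fin 1) ℝ) (K : Matrix (Fin 1) (Fin n) ℝ)
    (E : Matrix (Fin n) (Fin n) ℝ)
    (ℓ : ℕ → Matrix (Fin q) (Fin 1) ℝ) (hℓ : ∀ k, (ℓ k)ᵀ * onesCol q = 1)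
    (x : ℕ → Fin q × Fin n → ℝ)
    (hx : ∀ k, x (k + 1) =
      ((1 : Matrix (Fin q) (Fin q) ℝ) ⊗ₖ ((1 - B * K) * E) +
        (onesCol q * (ℓ k)ᵀ) ⊗ₖ ((B * K) * E)) *ᵥ x k) :
    (∀ k, ∀ i : Fin q, ∀ t : Fin n,
      x (k + 1) (i, t) =
        (((1 - B * K) * E) *ᵥ fun s => x k (i, s)) t +
          (((ℓ k)ᵀ ⊗ₖ ((B * K) * E)) *ᵥ x k) (0, t)) ∧
    ∀ k, ∀ i j : Fin q,
      (fun t => x (k + 1) (i, t) - x (k + 1) (j, t)) =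
        ((1 - B * K) * E) *ᵥ fun t => x k (i, t) - x k (j, t) := by
  simp only [onesCol_mul] at hx
  obtain ⟨block, error⟩ := blockwise_recursion_and_error_dynamics_general
    (fun _ => (1 - B * K) * E) (fun _ => B * K * E) (fun k => (ℓ k)ᵀ) x hx
  exact ⟨fun k i t => congrFun (block k i) t, error⟩
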